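/- Let a, b be positive integers with 2 ≤ a < b, p = 1 - a/b, and q, q̃ even integers with 2 ≤ q ≤ b, 2 ≤ q̃ ≤ a, p̃ > 0. With Z(σ) = ∫_{[0,r₁]×[0,r₂]} |x^a y^b + x^a y^{b-q} e^{-1/x^p} + x^{a-q̃} y^b e^{-1/y^{p̃}}|^σ dx dy for -1/b < σ < 0, one has lim_{σ → -1/b⁺} |log(bσ + 1)|^{-1} · Z(σ) = 1/(p q). -/

import Mathlib

open MeasureTheory Set Filter

/-- The function `f(x,y) = x^a y^b + x^a y^{b-q} e^{-1/x^p} + x^{a-q̃} y^b e^{-1/y^{p̃}}`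
(case (D)), with the flat exponential factors interpreted as `0` at `0`. -/
noncomputable def fD' (a b q qt : ℕ) (p pt : ℝ) (x y : ℝ) : ℝ :=
  x ^ a * y ^ b + x ^ a * y ^ (b - q) * (if x = 0 then 0 else Real.exp (-1 / x ^ p)) +
    x ^ (a - qt) * y ^ b * (if y = 0 then 0 else Real.exp (-1 / y ^ pt))

lemma fD'_of_pos (a b q qt : ℕ) (p pt : ℝ) {x y : ℝ} (hx : 0 < x) (hy : 0 < y) :
    fD' a b q qt p pt x y = x ^ a * y ^ b + x ^ a * y ^ (b - q) * Real.exp (-1 / x ^ p) +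
      x ^ (a - qt) * y ^ b * Real.exp (-1 / y ^ pt) := by
  simp [fD', hx.ne', hy.ne']

lemma measurable_fD' (a b q qt : ℕ) (p pt : ℝ) :
    Measurable (fun z : ℝ × ℝ => fD' a b q qt p pt z.1 z.2) := by
  unfold fD'
  have h1 : Measurable (fun x : ℝ => if x = 0 then 0 else Real.exp (-1 / x ^ p)) :=
    Measurable.ite (measurableSet_singleton 0) measurable_const (by fun_prop)
  have h2 : Measurable (fun x : ℝ => if x = 0 then 0 else Real.exp (-1 / x ^ pt)) :=
    Measurable.ite (measurableSet_singleton 0) measurable_const (by fun_prop)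
  have h1' : Measurable (fun z : ℝ × ℝ => if z.1 = 0 then 0 else Real.exp (-1 / z.1 ^ p)) :=
    h1.comp measurable_fst
  have h2' : Measurable (fun z : ℝ × ℝ => if z.2 = 0 then 0 else Real.exp (-1 / z.2 ^ pt)) :=
    h2.comp measurable_snd
  fun_prop

lemma measurable_abs_fD'_rpow (a b q qt : ℕ) (p pt σ : ℝ) :
    Measurable (fun z : ℝ × ℝ => |fD' a b q qt p pt z.1 z.2| ^ σ) := by
  have h := measurable_fD' a b q qt p pt
  have h' : Measurable (fun z : ℝ × ℝ => |fD' a b q qt p pt z.1 z.2|) := h.abs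
  exact h'.pow_const σ

lemma pow_mul_pow_rpow {x y : ℝ} (hx : 0 < x) (hy : 0 < y) (m n : ℕ) (σ : ℝ) :
    (x ^ m * y ^ n) ^ σ = x ^ (m * σ) * y ^ (n * σ) := by
  rw [Real.mul_rpow (by positivity) (by positivity), ← Real.rpow_natCast_mul hx.le,
    ← Real.rpow_natCast_mul hy.le]

lemma abs_fD'_rpow_le (a b q qt : ℕ) (p pt : ℝ) {x y σ : ℝ} (hx : 0 < x) (hy : 0 < y)
    (hσ : σ ≤ 0) :
    |fD' a b q qt p pt x y| ^ σ ≤ x ^ (a * σ) * y ^ (b * σ) := by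
  rw [fD'_of_pos _ _ _ _ _ _ hx hy, abs_of_nonneg (by positivity), ← pow_mul_pow_rpow hx hy]
  refine Real.rpow_le_rpow_of_nonpos (by positivity) ?_ hσ
  have h1 : 0 ≤ x ^ a * y ^ (b - q) * Real.exp (-1 / x ^ p) := by positivity
  have h2 : 0 ≤ x ^ (a - qt) * y ^ b * Real.exp (-1 / y ^ pt) := by positivity
  linarith

lemma abs_fD'_rpow_le_exp (a b q qt : ℕ) (p pt : ℝ) {x y σ : ℝ} (hx : 0 < x) (hy : 0 < y)
    (hσ : σ ≤ 0) :
    |fD' a b q qt p pt x y| ^ σ ≤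
      x ^ (a * σ) * Real.exp (-1 / x ^ p * σ) * y ^ ((b - q : ℕ) * σ) := by
  have h0 : x ^ (a * σ) * Real.exp (-1 / x ^ p * σ) * y ^ ((b - q : ℕ) * σ) =
      (x ^ a * y ^ (b - q) * Real.exp (-1 / x ^ p)) ^ σ := by
    rw [Real.mul_rpow (by positivity) (by positivity), pow_mul_pow_rpow hx hy, Real.exp_mul]
    ring
  rw [fD'_of_pos _ _ _ _ _ _ hx hy, abs_of_nonneg (by positivity), h0]
  refine Real.rpow_le_rpow_of_nonpos (by positivity) ?_ hσ
  have h1 : 0 ≤ x ^ a * y ^ b := by positivity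
  have h2 : 0 ≤ x ^ (a - qt) * y ^ b * Real.exp (-1 / y ^ pt) := by positivity
  linarith

lemma integrable_abs_fD'_rpow (a b q qt : ℕ) (p pt r₁ r₂ : ℝ) {σ : ℝ} (hσ : σ ≤ 0)
    (ha : -1 < a * σ) (hb : -1 < b * σ) (hr₁ : 0 ≤ r₁) (hr₂ : 0 ≤ r₂) :
    Integrable (fun z : ℝ × ℝ => |fD' a b q qt p pt z.1 z.2| ^ σ)
      ((volume.restrict (Ioc 0 r₁)).prod (volume.restrict (Ioc 0 r₂))) := by
  have h1 := (intervalIntegrable_iff_integrableOn_Ioc_of_le hr₁).1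
    (intervalIntegral.intervalIntegrable_rpow' (a := 0) (b := r₁) ha)
  have h2 := (intervalIntegrable_iff_integrableOn_Ioc_of_le hr₂).1
    (intervalIntegral.intervalIntegrable_rpow' (a := 0) (b := r₂) hb)
  refine (Integrable.mul_prod h1 h2).mono'
    (measurable_abs_fD'_rpow a b q qt p pt σ).aestronglyMeasurable ?_
  rw [Measure.prod_restrict]
  filter_upwards [ae_restrict_mem (measurableSet_Ioc.prod measurableSet_Ioc)] with z hz
  rw [Real.norm_of_nonneg (by positivity)]
  exact abs_fD'_rpow_le a b q qt p pt hz.1.1 hz.2.1 hσ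

lemma intervalIntegrable_abs_fD'_rpow (a b q qt : ℕ) (p pt : ℝ) {σ x : ℝ} (hσ : σ ≤ 0)
    (hb : -1 < b * σ) (hx : 0 < x) {r s : ℝ} (hr : 0 ≤ r) (hs : 0 ≤ s) :
    IntervalIntegrable (fun y => |fD' a b q qt p pt x y| ^ σ) volume r s := by
  refine ((intervalIntegral.intervalIntegrable_rpow' (a := r) (b := s) hb).const_mul
    (x ^ (a * σ))).mono_fun' ?_ ?_
  · exact ((measurable_abs_fD'_rpow a b q qt p pt σ).comp
      measurable_prodMk_left).aestronglyMeasurable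
  · filter_upwards [ae_restrict_mem measurableSet_uIoc] with y hy
    have hy0 : 0 < y := (le_min hr hs).trans_lt hy.1
    rw [Real.norm_of_nonneg (by positivity)]
    exact abs_fD'_rpow_le a b q qt p pt hx hy0 hσ

lemma setIntegral_abs_fD'_rpow_eq (a b q qt : ℕ) (p pt : ℝ) {σ r₁ r₂ : ℝ} (hσ : σ ≤ 0)
    (ha : -1 < a * σ) (hb : -1 < b * σ) (hr₁ : 0 ≤ r₁) (hr₂ : 0 ≤ r₂) :
    IntervalIntegrable (fun x => ∫ y in 0..r₂, |fD' a b q qt p pt x y| ^ σ) volume 0 r₁ ∧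
    ∫ z in Icc (0 : ℝ) r₁ ×ˢ Icc (0 : ℝ) r₂, |fD' a b q qt p pt z.1 z.2| ^ σ =
      ∫ x in 0..r₁, ∫ y in 0..r₂, |fD' a b q qt p pt x y| ^ σ := by
  have hi := integrable_abs_fD'_rpow a b q qt p pt r₁ r₂ hσ ha hb hr₁ hr₂
  simp only [intervalIntegral.integral_of_le hr₁, intervalIntegral.integral_of_le hr₂]
  refine ⟨(intervalIntegrable_iff_integrableOn_Ioc_of_le hr₁).2 hi.integral_prod_left, ?_⟩
  rw [Measure.volume_eq_prod, ← Measure.prod_restrict,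
    ← Measure.restrict_congr_set (Ioc_ae_eq_Icc (μ := volume) (a := (0 : ℝ)) (b := r₁)),
    ← Measure.restrict_congr_set (Ioc_ae_eq_Icc (μ := volume) (a := (0 : ℝ)) (b := r₂)),
    integral_prod _ hi]

lemma integral_abs_fD'_rpow_le (a b q qt : ℕ) (p pt : ℝ) (hq : 0 < q) (hqb : q ≤ b)
    {σ x r : ℝ} (hσ : σ ≤ 0) (hb : -1 < b * σ) (hx : 0 < x) (hr : 0 ≤ r) (hr1 : r ≤ 1) :
    ∫ y in 0..r, |fD' a b q qt p pt x y| ^ σ ≤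
      x ^ (a * σ) * (b / q + (1 - Real.exp (-1 / x ^ p / q * (b * σ + 1))) / (b * σ + 1)) := by
  set A : ℝ := Real.exp (-1 / x ^ p / q) with hA
  have hq' : (0 : ℝ) < q := by exact_mod_cast hq
  have hqb' : (q : ℝ) ≤ b := by exact_mod_cast hqb
  have hbpos : (0 : ℝ) < b := hq'.trans_le hqb'
  have ht : 0 < x ^ p := Real.rpow_pos_of_pos hx p
  have hA0 : 0 < A := Real.exp_pos _
  have hA1 : A ≤ 1 := by
    rw [hA, Real.exp_le_one_iff, neg_div, neg_div]
    have : 0 < 1 / x ^ p / q := by positivity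
    linarith
  have hint : ∀ {r s : ℝ}, 0 ≤ r → 0 ≤ s →
      IntervalIntegrable (fun y => |fD' a b q qt p pt x y| ^ σ) volume r s := fun h h' =>
    intervalIntegrable_abs_fD'_rpow a b q qt p pt hσ hb hx h h'
  have hcast : ((b - q : ℕ) : ℝ) = b - q := by push_cast [Nat.cast_sub hqb]; ring
  have hden : (q : ℝ) / b ≤ (b - q : ℕ) * σ + 1 := by
    rw [hcast, div_le_iff₀ hbpos]
    nlinarith
  have hden0 : (0 : ℝ) < (b - q : ℕ) * σ + 1 := lt_of_lt_of_le (by positivity) hden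
  have h1 : ∫ y in 0..r, |fD' a b q qt p pt x y| ^ σ ≤
      ∫ y in 0..1, |fD' a b q qt p pt x y| ^ σ :=
    intervalIntegral.integral_mono_interval le_rfl hr hr1
      (Eventually.of_forall fun y => by positivity) (hint le_rfl zero_le_one)
  have h2 : ∫ y in 0..A, |fD' a b q qt p pt x y| ^ σ ≤ x ^ (a * σ) * (b / q) := by
    calc ∫ y in 0..A, |fD' a b q qt p pt x y| ^ σ
        ≤ ∫ y in 0..A, x ^ (a * σ) * Real.exp (-1 / x ^ p * σ) * y ^ ((b - q : ℕ) * σ) := by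
          refine intervalIntegral.integral_mono_on_of_le_Ioo hA0.le (hint le_rfl hA0.le)
            ((intervalIntegral.intervalIntegrable_rpow' (by linarith)).const_mul _) ?_
          intro y hy
          exact abs_fD'_rpow_le_exp a b q qt p pt hx hy.1 hσ
      _ = x ^ (a * σ) * (Real.exp (-1 / x ^ p / q * (b * σ + 1)) / ((b - q : ℕ) * σ + 1)) := by
          rw [intervalIntegral.integral_const_mul, integral_rpow (Or.inl (by linarith)),
            Real.zero_rpow hden0.ne', sub_zero, hA, ← Real.exp_mul, mul_assoc, ← mul_div_assoc,
            ← Real.exp_add, hcast]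
          congr 4
          field_simp
          ring
      _ ≤ x ^ (a * σ) * (b / q) := by
          refine mul_le_mul_of_nonneg_left ?_ (by positivity)
          rw [div_le_div_iff₀ hden0 hq']
          have he : Real.exp (-1 / x ^ p / q * (b * σ + 1)) ≤ 1 := by
            rw [Real.exp_le_one_iff, neg_div, neg_div, neg_mul]
            have : 0 < 1 / x ^ p / q * (b * σ + 1) := by
              have : (0 : ℝ) < b * σ + 1 := by linarith
              positivity
            linarith
          rw [div_le_iff₀ hbpos] at hden
          nlinarith
  have h3 : ∫ y in A..1, |fD' a b q qt p pt x y| ^ σ ≤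
      x ^ (a * σ) * ((1 - Real.exp (-1 / x ^ p / q * (b * σ + 1))) / (b * σ + 1)) := by
    calc ∫ y in A..1, |fD' a b q qt p pt x y| ^ σ
        ≤ ∫ y in A..1, x ^ (a * σ) * y ^ (b * σ) := by
          refine intervalIntegral.integral_mono_on_of_le_Ioo hA1 (hint hA0.le zero_le_one)
            ((intervalIntegral.intervalIntegrable_rpow' hb).const_mul _) ?_
          intro y hy
          exact abs_fD'_rpow_le a b q qt p pt hx (hA0.trans hy.1) hσ
      _ = _ := by
          rw [intervalIntegral.integral_const_mul, integral_rpow (Or.inl hb), Real.one_rpow,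
            hA, ← Real.exp_mul]
  rw [← intervalIntegral.integral_add_adjacent_intervals (hint le_rfl hA0.le)
    (hint hA0.le zero_le_one)] at h1
  linarith

lemma setIntegral_abs_fD'_rpow_le (a b q qt : ℕ) (p pt : ℝ) (hp : p = 1 - (a : ℝ) / b)
    (hab : a < b) (hq : 0 < q) (hqb : q ≤ b) {σ r₁ r₂ : ℝ} (hσ : σ ≤ 0)
    (hb : 0 < b * σ + 1) (hr₁1 : r₁ ≤ 1) (hr₂ : 0 ≤ r₂) (hr₂1 : r₂ ≤ 1)
    (hδ : (b * σ + 1) ^ (1 / p) ≤ r₁) :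
    ∫ z in Icc (0 : ℝ) r₁ ×ˢ Icc (0 : ℝ) r₂, |fD' a b q qt p pt z.1 z.2| ^ σ ≤
      (b / q + 1) / p + b / q / p + -Real.log (b * σ + 1) / (p * q) := by
  have hab' : (a : ℝ) < b := by exact_mod_cast hab
  have hq' : (0 : ℝ) < q := by exact_mod_cast hq
  have hbpos : (0 : ℝ) < b := lt_of_le_of_lt (Nat.cast_nonneg a) hab'
  have hp0 : 0 < p := by rw [hp, sub_pos, div_lt_one hbpos]; exact hab'
  have ha : -1 < a * σ := by nlinarith
  have hb1 : -1 < b * σ := by linarith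
  set ε : ℝ := b * σ + 1 with hε
  have hε1 : ε ≤ 1 := by nlinarith
  set δ : ℝ := ε ^ (1 / p) with hδdef
  have hδ0 : 0 < δ := Real.rpow_pos_of_pos hb _
  have hr₁ : 0 < r₁ := hδ0.trans_le hδ
  have hδp : δ ^ p = ε := by
    rw [hδdef, ← Real.rpow_mul hb.le, one_div_mul_cancel hp0.ne', Real.rpow_one]
  obtain ⟨hint, heq⟩ := setIntegral_abs_fD'_rpow_eq a b q qt p pt hσ ha hb1 hr₁.le hr₂
  have hint1 := hint.mono_set (c := 0) (d := δ) (by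
    rw [uIcc_of_le hδ0.le, uIcc_of_le hr₁.le]; exact Icc_subset_Icc le_rfl hδ)
  have hint2 := hint.mono_set (c := δ) (d := r₁) (by
    rw [uIcc_of_le hδ, uIcc_of_le hr₁.le]; exact Icc_subset_Icc hδ0.le le_rfl)
  have hpow : ∀ {x : ℝ}, 0 < x → x ≤ 1 → x ^ (a * σ) ≤ x ^ (p - 1) := fun h0 h1 => by
    refine Real.rpow_le_rpow_of_exponent_ge h0 h1 ?_
    have : p - 1 = -(a : ℝ) / b := by rw [hp]; ring
    rw [this, div_le_iff₀ hbpos]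
    have : (0 : ℝ) ≤ a * ε := by positivity
    rw [hε] at this
    nlinarith
  have hB : ∀ {x : ℝ}, 0 < x → x ≤ 1 → ∀ {B : ℝ}, 0 ≤ B →
      (1 - Real.exp (-1 / x ^ p / q * ε)) / ε ≤ B →
      ∫ y in 0..r₂, |fD' a b q qt p pt x y| ^ σ ≤ x ^ (p - 1) * (b / q + B) := by
    intro x h0 h1 B hB0 hB
    calc _ ≤ _ := integral_abs_fD'_rpow_le a b q qt p pt hq hqb hσ hb1 h0 hr₂ hr₂1
      _ ≤ x ^ (a * σ) * (b / q + B) := by gcongr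
      _ ≤ _ := mul_le_mul_of_nonneg_right (hpow h0 h1) (by positivity)
  have h1 : ∫ x in 0..δ, ∫ y in 0..r₂, |fD' a b q qt p pt x y| ^ σ ≤ (b / q + 1) / p := by
    calc ∫ x in 0..δ, ∫ y in 0..r₂, |fD' a b q qt p pt x y| ^ σ
        ≤ ∫ x in 0..δ, x ^ (p - 1) * (b / q + 1 / ε) := by
          refine intervalIntegral.integral_mono_on_of_le_Ioo hδ0.le hint1
            ((intervalIntegral.intervalIntegrable_rpow' (by linarith)).mul_const _) ?_
          intro x hx
          refine hB hx.1 (by linarith [hx.2]) (by positivity) ?_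
          gcongr
          linarith [Real.exp_pos (-1 / x ^ p / q * ε)]
      _ = (b / q * ε + 1) / p := by
          rw [intervalIntegral.integral_mul_const, integral_rpow (Or.inl (by linarith)),
            sub_add_cancel, Real.zero_rpow hp0.ne', sub_zero, hδp]
          field_simp
      _ ≤ (b / q + 1) / p := by
          gcongr
          exact mul_le_of_le_one_right (by positivity) hε1
  have h2 : ∫ x in δ..r₁, ∫ y in 0..r₂, |fD' a b q qt p pt x y| ^ σ ≤
      b / q / p + -Real.log ε / (p * q) := by
    have hi1 : IntervalIntegrable (fun x : ℝ => x ^ (p - 1) * (b / q)) volume δ r₁ :=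
      (intervalIntegral.intervalIntegrable_rpow' (by linarith)).mul_const _
    have hi2 : IntervalIntegrable (fun x : ℝ => x⁻¹ / q) volume δ r₁ := by
      refine (intervalIntegral.intervalIntegrable_inv (fun x hx => ?_) continuousOn_id).div_const _
      rw [uIcc_of_le hδ] at hx
      exact (hδ0.trans_le hx.1).ne'
    calc ∫ x in δ..r₁, ∫ y in 0..r₂, |fD' a b q qt p pt x y| ^ σ
        ≤ ∫ x in δ..r₁, (x ^ (p - 1) * (b / q) + x⁻¹ / q) := by
          refine intervalIntegral.integral_mono_on_of_le_Ioo hδ hint2 (hi1.add hi2) ?_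
          intro x hx
          have hx0 : 0 < x := hδ0.trans hx.1
          have hxp : 0 < x ^ p := Real.rpow_pos_of_pos hx0 p
          have hle : (1 - Real.exp (-1 / x ^ p / q * ε)) / ε ≤ 1 / x ^ p / q := by
            rw [div_le_iff₀ hb]
            have := Real.add_one_le_exp (-1 / x ^ p / q * ε)
            have e : -1 / x ^ p / q * ε = -(1 / x ^ p / q * ε) := by ring
            linarith
          refine (hB hx0 (by linarith [hx.2]) (by positivity) hle).trans_eq ?_
          rw [mul_add, Real.rpow_sub_one hx0.ne']
          field_simp
      _ = b / q * ((r₁ ^ p - ε) / p) + Real.log (r₁ / δ) / q := by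
          rw [intervalIntegral.integral_add hi1 hi2, intervalIntegral.integral_mul_const,
            intervalIntegral.integral_div, integral_inv_of_pos hδ0 hr₁,
            integral_rpow (Or.inl (by linarith)), sub_add_cancel, hδp, mul_comm]
      _ ≤ b / q * (1 / p) + -(1 / p * Real.log ε) / q := by
          gcongr
          · linarith [Real.rpow_le_one hr₁.le hr₁1 hp0.le]
          · rw [Real.log_div hr₁.ne' hδ0.ne', hδdef, Real.log_rpow hb]
            linarith [Real.log_nonpos hr₁.le hr₁1]
      _ = _ := by field_simp
  rw [heq, ← intervalIntegral.integral_add_adjacent_intervals hint1 hint2]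
  linarith

lemma exists_pos_forall_flat_le (p pt η : ℝ) (q qt : ℕ) (hp : 0 < p) (hpt : 0 < pt)
    (hη : 0 < η) (hq : 0 < q) (r : ℝ) (hr : 0 < r) :
    ∃ x₀ : ℝ, 0 < x₀ ∧ x₀ ≤ r ∧ ∀ x : ℝ, 0 < x → x ≤ x₀ →
      Real.exp (-1 / x ^ pt) ≤ η / 2 * x ^ qt ∧ x ^ q ≤ η / 2 ∧
      -(η * (1 / x ^ p / q)) ≤ 2 * Real.log x := by
  have hq' : (0 : ℝ) < q := by exact_mod_cast hq
  have t1 : Tendsto (fun x : ℝ => Real.log (η / 2) * x ^ pt + qt * (Real.log x * x ^ pt))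
      (nhdsWithin 0 (Ioi 0)) (nhds (Real.log (η / 2) * 0 + qt * 0)) := by
    refine (Tendsto.const_mul _ ?_).add ((tendsto_log_mul_rpow_nhdsGT_zero hpt).const_mul _)
    have : Tendsto (fun x : ℝ => x ^ pt) (nhds 0) (nhds (0 ^ pt)) :=
      (Real.continuousAt_rpow_const 0 pt (Or.inr hpt.le)).tendsto
    rw [Real.zero_rpow hpt.ne'] at this
    exact this.mono_left nhdsWithin_le_nhds
  have t2 : Tendsto (fun x : ℝ => x ^ q) (nhdsWithin 0 (Ioi 0)) (nhds 0) := by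
    have : Tendsto (fun x : ℝ => x ^ q) (nhds 0) (nhds (0 ^ q)) := (continuous_pow q).tendsto 0
    rw [zero_pow hq.ne'] at this
    exact this.mono_left nhdsWithin_le_nhds
  have t3 := tendsto_log_mul_rpow_nhdsGT_zero hp
  have e1 := t1.eventually_const_lt (u := -1) (by norm_num)
  have e2 := t2.eventually_lt_const (u := η / 2) (by positivity)
  have e3 := t3.eventually_const_lt (u := -(η / (2 * q))) (by rw [neg_lt_zero]; positivity)
  obtain ⟨u, hu, hsub⟩ := mem_nhdsGT_iff_exists_Ioc_subset.1 (e1.and (e2.and e3))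
  refine ⟨min u r, lt_min hu hr, min_le_right _ _, fun x hx hxu => ?_⟩
  obtain ⟨h1, h2, h3⟩ := hsub ⟨hx, hxu.trans (min_le_left _ _)⟩
  have hxp : 0 < x ^ p := Real.rpow_pos_of_pos hx p
  have hxpt : 0 < x ^ pt := Real.rpow_pos_of_pos hx pt
  refine ⟨?_, h2.le, ?_⟩
  · rw [← Real.le_log_iff_exp_le (by positivity), Real.log_mul (by positivity) (by positivity),
      Real.log_pow, div_le_iff₀ hxpt]
    linarith
  · have h4 : -(η / (2 * q)) / x ^ p < Real.log x := by rwa [div_lt_iff₀ hxp]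
    have : -(η * (1 / x ^ p / q)) = 2 * (-(η / (2 * q)) / x ^ p) := by field_simp
    linarith

lemma le_abs_fD'_rpow (a b q qt : ℕ) (p pt : ℝ) (hpt : 0 < pt) (hqb : q ≤ b) (hqta : qt ≤ a)
    {σ x y η : ℝ} (hσ : σ ≤ 0) (hσ1 : -1 ≤ σ) (hη : 0 < η) (hx : 0 < x) (hy : 0 < y)
    (hb : 0 ≤ b * σ + 1)
    (hx1 : x ≤ 1) (hyx : y ≤ x) (hxy : Real.exp (-1 / x ^ p / q) ≤ x * y) (hq : 0 < q)
    (hflat : Real.exp (-1 / x ^ pt) ≤ η / 2 * x ^ qt) (hxq : x ^ q ≤ η / 2) :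
    (1 + η)⁻¹ * x ^ (a * σ) * Real.exp (-1 / x ^ p / q * (b * σ + 1)) * y⁻¹ ≤
      |fD' a b q qt p pt x y| ^ σ := by
  have hq' : (0 : ℝ) < q := by exact_mod_cast hq
  have h2 : x ^ a * y ^ (b - q) * Real.exp (-1 / x ^ p) ≤ η / 2 * (x ^ a * y ^ b) := by
    have hA : Real.exp (-1 / x ^ p) = Real.exp (-1 / x ^ p / q) ^ q := by
      rw [← Real.exp_nat_mul]
      congr 1
      field_simp
    calc x ^ a * y ^ (b - q) * Real.exp (-1 / x ^ p)
        ≤ x ^ a * y ^ (b - q) * (x * y) ^ q := by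
          rw [hA]
          gcongr
      _ = x ^ q * (x ^ a * (y ^ (b - q) * y ^ q)) := by ring
      _ = x ^ q * (x ^ a * y ^ b) := by rw [pow_sub_mul_pow _ hqb]
      _ ≤ _ := by gcongr
  have h3 : x ^ (a - qt) * y ^ b * Real.exp (-1 / y ^ pt) ≤ η / 2 * (x ^ a * y ^ b) := by
    have hle : Real.exp (-1 / y ^ pt) ≤ η / 2 * x ^ qt := by
      refine le_trans (Real.exp_le_exp.2 ?_) hflat
      have hypt : 0 < y ^ pt := Real.rpow_pos_of_pos hy pt
      have : y ^ pt ≤ x ^ pt := Real.rpow_le_rpow hy.le hyx hpt.le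
      rw [neg_div, neg_div, neg_le_neg_iff]
      exact one_div_le_one_div_of_le hypt this
    calc x ^ (a - qt) * y ^ b * Real.exp (-1 / y ^ pt)
        ≤ x ^ (a - qt) * y ^ b * (η / 2 * x ^ qt) := by gcongr
      _ = η / 2 * ((x ^ (a - qt) * x ^ qt) * y ^ b) := by ring
      _ = _ := by rw [pow_sub_mul_pow _ hqta]
  have hle : |fD' a b q qt p pt x y| ≤ (1 + η) * (x ^ a * y ^ b) := by
    rw [fD'_of_pos _ _ _ _ _ _ hx hy, abs_of_nonneg (by positivity)]
    linarith
  have hpos : 0 < |fD' a b q qt p pt x y| := by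
    rw [fD'_of_pos _ _ _ _ _ _ hx hy, abs_of_nonneg (by positivity)]
    positivity
  calc _ = (1 + η)⁻¹ * (x ^ (a * σ) * (Real.exp (-1 / x ^ p / q) ^ (b * σ + 1) * y⁻¹)) := by
        rw [Real.exp_mul]
        ring
    _ ≤ (1 + η) ^ σ * (x ^ (a * σ) * (y ^ (b * σ + 1) * y⁻¹)) := by
        have e1 : (1 + η)⁻¹ ≤ (1 + η) ^ σ := by
          rw [← Real.rpow_neg_one]
          exact Real.rpow_le_rpow_of_exponent_le (by linarith) hσ1
        have e2 : Real.exp (-1 / x ^ p / q) ^ (b * σ + 1) ≤ y ^ (b * σ + 1) :=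
          Real.rpow_le_rpow (Real.exp_pos _).le
            (hxy.trans (mul_le_of_le_one_left hy.le hx1)) hb
        gcongr
    _ = ((1 + η) * (x ^ a * y ^ b)) ^ σ := by
        rw [Real.mul_rpow (by positivity) (by positivity), pow_mul_pow_rpow hx hy,
          Real.rpow_add_one hy.ne', mul_inv_cancel_right₀ hy.ne']
    _ ≤ _ := Real.rpow_le_rpow_of_nonpos hpos hle hσ

lemma le_integral_abs_fD'_rpow (a b q qt : ℕ) (p pt : ℝ) (hpt : 0 < pt) (hqb : q ≤ b)
    (hqta : qt ≤ a) {σ x η r : ℝ} (hσ : σ ≤ 0) (hσ1 : -1 ≤ σ) (hη : 0 < η) (hη1 : η < 1)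
    (hx : 0 < x) (hb : 0 < b * σ + 1) (hx1 : x ≤ 1) (hxr : x ≤ r) (hq : 0 < q)
    (hflat : Real.exp (-1 / x ^ pt) ≤ η / 2 * x ^ qt) (hxq : x ^ q ≤ η / 2)
    (hlog : -(η * (1 / x ^ p / q)) ≤ 2 * Real.log x) :
    (1 + η)⁻¹ * x ^ (a * σ) * Real.exp (-1 / x ^ p / q * (b * σ + 1)) *
        ((1 - η) * (1 / x ^ p / q)) ≤
      ∫ y in 0..r, |fD' a b q qt p pt x y| ^ σ := by
  have hq' : (0 : ℝ) < q := by exact_mod_cast hq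
  have hb1 : -1 < b * σ := by linarith
  have ht : 0 < 1 / x ^ p / q := by
    have : 0 < x ^ p := Real.rpow_pos_of_pos hx p
    positivity
  have hneg : -1 / x ^ p / q = -(1 / x ^ p / q) := by ring
  set A : ℝ := Real.exp (-1 / x ^ p / q) with hA
  have hA0 : 0 < A := Real.exp_pos _
  have hAx : A / x ≤ x := by
    rw [div_le_iff₀ hx, ← Real.le_log_iff_exp_le (by positivity), Real.log_mul hx.ne' hx.ne',
      hneg]
    nlinarith
  have hlogA : Real.log (x / (A / x)) = 2 * Real.log x + 1 / x ^ p / q := by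
    rw [Real.log_div hx.ne' (by positivity), Real.log_div hA0.ne' hx.ne', hA, Real.log_exp, hneg]
    ring
  have hAx0 : 0 < A / x := by positivity
  set c : ℝ := (1 + η)⁻¹ * x ^ (a * σ) * Real.exp (-1 / x ^ p / q * (b * σ + 1)) with hc
  calc c * ((1 - η) * (1 / x ^ p / q)) ≤ c * Real.log (x / (A / x)) := by
        rw [hlogA]
        refine mul_le_mul_of_nonneg_left ?_ (by positivity)
        linarith
    _ = ∫ y in (A / x)..x, c * y⁻¹ := by
        rw [intervalIntegral.integral_const_mul, integral_inv_of_pos hAx0 hx]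
    _ ≤ ∫ y in (A / x)..x, |fD' a b q qt p pt x y| ^ σ := by
        refine intervalIntegral.integral_mono_on_of_le_Ioo hAx ?_
          (intervalIntegrable_abs_fD'_rpow a b q qt p pt hσ hb1 hx hAx0.le hx.le) ?_
        · refine (intervalIntegral.intervalIntegrable_inv (fun y hy => ?_)
            continuousOn_id).const_mul _
          rw [uIcc_of_le hAx] at hy
          exact (hAx0.trans_le hy.1).ne'
        · intro y hy
          refine le_abs_fD'_rpow a b q qt p pt hpt hqb hqta hσ hσ1 hη hx (hAx0.trans hy.1) hb.le
            hx1 hy.2.le ?_ hq hflat hxq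
          have := hy.1.le
          rwa [div_le_iff₀' hx] at this
    _ ≤ _ := intervalIntegral.integral_mono_interval hAx0.le hAx hxr
        (Eventually.of_forall fun y => by positivity)
        (intervalIntegrable_abs_fD'_rpow a b q qt p pt hσ hb1 hx le_rfl (hx.le.trans hxr))

lemma le_setIntegral_abs_fD'_rpow (a b q qt : ℕ) (p pt : ℝ) (hp : p = 1 - (a : ℝ) / b)
    (hab : a < b) (hpt : 0 < pt) (hq : 0 < q) (hqb : q ≤ b) (hqta : qt ≤ a)
    {r₁ r₂ η : ℝ} (hr₁ : 0 < r₁) (hr₁1 : r₁ ≤ 1) (hr₂ : 0 < r₂) (hη : 0 < η) (hη1 : η < 1) :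
    ∃ x₀ : ℝ, 0 < x₀ ∧ ∀ σ : ℝ, σ ≤ 0 → 0 < b * σ + 1 →
      ((b * σ + 1) / η) ^ (1 / p) ≤ x₀ →
      (1 + η)⁻¹ * (1 - η) * Real.exp (-η) *
          Real.exp (Real.log ((b * σ + 1) / η) / p * (b * σ + 1)) / q *
          (Real.log x₀ - Real.log ((b * σ + 1) / η) / p) ≤
        ∫ z in Icc (0 : ℝ) r₁ ×ˢ Icc (0 : ℝ) r₂, |fD' a b q qt p pt z.1 z.2| ^ σ := by
  have hab' : (a : ℝ) < b := by exact_mod_cast hab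
  have hq' : (0 : ℝ) < q := by exact_mod_cast hq
  have hq1 : (1 : ℝ) ≤ q := by exact_mod_cast hq
  have hbpos : (0 : ℝ) < b := lt_of_le_of_lt (Nat.cast_nonneg a) hab'
  have hb1' : (1 : ℝ) ≤ b := by exact_mod_cast hq.trans_le hqb
  have hp0 : 0 < p := by rw [hp, sub_pos, div_lt_one hbpos]; exact hab'
  obtain ⟨x₀, hx₀, hx₀r, H⟩ := exists_pos_forall_flat_le p pt η q qt hp0 hpt hη hq
    (min r₁ r₂) (lt_min hr₁ hr₂)
  refine ⟨x₀, hx₀, fun σ hσ hb hδ => ?_⟩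
  have ha : -1 < a * σ := by nlinarith
  have hb1 : -1 < b * σ := by linarith
  have hσ1 : -1 ≤ σ := by nlinarith
  set ε : ℝ := b * σ + 1 with hε
  set δ : ℝ := (ε / η) ^ (1 / p) with hδdef
  have hεη : 0 < ε / η := by positivity
  have hδ0 : 0 < δ := Real.rpow_pos_of_pos hεη _
  have hδp : δ ^ p = ε / η := by
    rw [hδdef, ← Real.rpow_mul hεη.le, one_div_mul_cancel hp0.ne', Real.rpow_one]
  have hlogδ : Real.log δ = Real.log (ε / η) / p := by
    rw [hδdef, Real.log_rpow hεη]
    ring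
  have hδε : Real.exp (Real.log (ε / η) / p * ε) = δ ^ ε := by
    rw [← hlogδ, Real.rpow_def_of_pos hδ0]
  obtain ⟨hint, heq⟩ := setIntegral_abs_fD'_rpow_eq a b q qt p pt hσ ha hb1 hr₁.le hr₂.le
  have hx₀r₁ : x₀ ≤ r₁ := hx₀r.trans (min_le_left _ _)
  have hx₀r₂ : x₀ ≤ r₂ := hx₀r.trans (min_le_right _ _)
  have hint2 := hint.mono_set (c := δ) (d := x₀) (by
    rw [uIcc_of_le hδ, uIcc_of_le hr₁.le]; exact Icc_subset_Icc hδ0.le hx₀r₁)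
  rw [heq, hδε, ← hlogδ, ← Real.log_div hx₀.ne' hδ0.ne', ← integral_inv_of_pos hδ0 hx₀,
    ← intervalIntegral.integral_const_mul]
  calc _ ≤ ∫ x in δ..x₀, ∫ y in 0..r₂, |fD' a b q qt p pt x y| ^ σ := by
        refine intervalIntegral.integral_mono_on_of_le_Ioo hδ ?_ hint2 ?_
        · refine (intervalIntegral.intervalIntegrable_inv (fun y hy => ?_)
            continuousOn_id).const_mul _
          rw [uIcc_of_le hδ] at hy
          exact (hδ0.trans_le hy.1).ne'
        · intro x hx
          have hx0 : 0 < x := hδ0.trans hx.1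
          have hx1 : x ≤ 1 := by linarith [hx.2]
          have hxp : 0 < x ^ p := Real.rpow_pos_of_pos hx0 p
          obtain ⟨h1, h2, h3⟩ := H x hx0 hx.2.le
          refine le_trans ?_ (le_integral_abs_fD'_rpow a b q qt p pt hpt hqb hqta hσ hσ1 hη hη1
            hx0 hb hx1 (hx.2.le.trans hx₀r₂) hq h1 h2 h3)
          have e1 : Real.exp (-η) ≤ Real.exp (-1 / x ^ p / q * ε) := by
            refine Real.exp_le_exp.2 ?_
            have hle : ε / η ≤ x ^ p := by
              rw [← hδp]
              exact Real.rpow_le_rpow hδ0.le hx.1.le hp0.le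
            rw [div_le_iff₀ hη] at hle
            have : ε / (x ^ p * q) ≤ η := by
              rw [div_le_iff₀ (by positivity)]
              nlinarith [mul_pos hη hxp]
            have e : -1 / x ^ p / q * ε = -(ε / (x ^ p * q)) := by field_simp
            linarith
          have e2 : x ^ (p - 1) * δ ^ ε ≤ x ^ (a * σ) := by
            have e3 : (a : ℝ) * σ = p - 1 + (a : ℝ) / b * ε := by
              rw [hp, hε]
              field_simp
              ring
            rw [e3, Real.rpow_add hx0]
            gcongr
            calc δ ^ ε ≤ x ^ ε := Real.rpow_le_rpow hδ0.le hx.1.le hb.le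
              _ ≤ _ := Real.rpow_le_rpow_of_exponent_ge hx0 hx1
                (mul_le_of_le_one_left hb.le ((div_le_one hbpos).2 hab'.le))
          have hη' : 0 < 1 - η := by linarith
          calc _ = (1 + η)⁻¹ * (x ^ (p - 1) * δ ^ ε) * Real.exp (-η) *
                ((1 - η) * (1 / x ^ p / q)) := by
                rw [Real.rpow_sub_one hx0.ne']
                field_simp
            _ ≤ _ := by gcongr
    _ ≤ _ := by
        refine intervalIntegral.integral_mono_interval hδ0.le hδ hx₀r₁ ?_ hint
        exact Eventually.of_forall fun x => intervalIntegral.integral_nonneg hr₂.le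
          fun y _ => by positivity

/-- Critical case `p = 1 - a/b`:
`lim_{σ → -1/b⁺} |log(bσ+1)|⁻¹ ∫_V |f|^σ = 1/(p q)`. -/
theorem stmt17 (a b q qt : ℕ) (ha : 2 ≤ a) (hab : a < b) (pt : ℝ) (hpt : 0 < pt)
    (hq : Even q) (hq2 : 2 ≤ q) (hqb : q ≤ b) (hqt : Even qt) (hqt2 : 2 ≤ qt)
    (hqta : qt ≤ a) (r₁ r₂ : ℝ) (hr₁ : r₁ ∈ Ioo (0 : ℝ) 1) (hr₂ : r₂ ∈ Ioo (0 : ℝ) 1) :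
    Tendsto
      (fun σ : ℝ => |Real.log ((b : ℝ) * σ + 1)|⁻¹ *
        ∫ z in Icc (0 : ℝ) r₁ ×ˢ Icc (0 : ℝ) r₂,
          |fD' a b q qt (1 - (a : ℝ) / b) pt z.1 z.2| ^ σ)
      (nhdsWithin (-1 / b) (Ioo (-1 / b) 0))
      (nhds (1 / ((1 - (a : ℝ) / b) * q))) := by
  have hab' : (a : ℝ) < b := by exact_mod_cast hab
  have hq0 : 0 < q := by omega
  have hq' : (0 : ℝ) < q := by exact_mod_cast hq0
  have hbpos : (0 : ℝ) < b := lt_of_le_of_lt (Nat.cast_nonneg a) hab'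
  obtain ⟨p, hp⟩ : ∃ p : ℝ, p = 1 - (a : ℝ) / b := ⟨_, rfl⟩
  have hp0 : 0 < p := by rw [hp, sub_pos, div_lt_one hbpos]; exact hab'
  rw [← hp]
  set l := nhdsWithin (-1 / (b : ℝ)) (Ioo (-1 / (b : ℝ)) 0) with hl
  have hmem : ∀ᶠ σ in l, σ ≤ 0 ∧ 0 < (b : ℝ) * σ + 1 ∧ (b : ℝ) * σ + 1 < 1 := by
    filter_upwards [self_mem_nhdsWithin] with σ hσ
    have h1 := hσ.1
    rw [div_lt_iff₀ hbpos] at h1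
    exact ⟨hσ.2.le, by linarith, by nlinarith [hσ.2]⟩
  have hε : Tendsto (fun σ : ℝ => (b : ℝ) * σ + 1) l (nhdsWithin 0 (Ioi 0)) := by
    refine tendsto_nhdsWithin_iff.2 ⟨?_, hmem.mono fun σ h => h.2.1⟩
    have h : Tendsto (fun σ : ℝ => (b : ℝ) * σ + 1) (nhds (-1 / (b : ℝ)))
        (nhds ((b : ℝ) * (-1 / b) + 1)) := (by fun_prop : Continuous _).tendsto _
    rw [mul_div_cancel₀ _ hbpos.ne', neg_add_cancel] at h
    exact h.mono_left nhdsWithin_le_nhds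
  have hε0 := tendsto_nhdsWithin_iff.1 hε |>.1
  have hinv : Tendsto (fun σ : ℝ => |Real.log ((b : ℝ) * σ + 1)|⁻¹) l (nhds 0) :=
    (tendsto_abs_atBot_atTop.comp (Real.tendsto_log_nhdsGT_zero.comp hε)).inv_tendsto_atTop
  have hδ : ∀ η : ℝ, 0 < η → Tendsto (fun σ : ℝ => (((b : ℝ) * σ + 1) / η) ^ (1 / p)) l
      (nhds 0) := by
    intro η hη
    have h := (hε0.div_const η).rpow_const (p := 1 / p) (Or.inr (by positivity))
    rwa [zero_div, Real.zero_rpow (by positivity)] at h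
  refine tendsto_order.2 ⟨fun c hc => ?_, fun c hc => ?_⟩
  · have hκ : Tendsto (fun η : ℝ => (1 + η)⁻¹ * (1 - η) * Real.exp (-η) * 1 / q * (0 + 1 / p))
        (nhdsWithin 0 (Ioi 0)) (nhds (1 / (p * q))) := by
      have h : ContinuousAt
          (fun η : ℝ => (1 + η)⁻¹ * (1 - η) * Real.exp (-η) * 1 / q * (0 + 1 / p)) 0 := by
        have : (1 : ℝ) + 0 ≠ 0 := by norm_num
        fun_prop (disch := assumption)
      have h' := h.tendsto.mono_left (nhdsWithin_le_nhds (s := Ioi 0))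
      convert h' using 2
      simp
    obtain ⟨η, hηc, hη0, hη1⟩ := ((hκ.eventually_const_lt hc).and
      (Ioo_mem_nhdsGT (zero_lt_one (α := ℝ)))).exists
    obtain ⟨x₀, hx₀, H⟩ := le_setIntegral_abs_fD'_rpow a b q qt p pt hp hab hpt hq0 hqb hqta
      hr₁.1 hr₁.2.le hr₂.1 hη0 hη1
    have hE : Tendsto (fun σ : ℝ => Real.exp (Real.log (((b : ℝ) * σ + 1) / η) / p *
        ((b : ℝ) * σ + 1))) l (nhds 1) := by
      have h1 := (tendsto_log_mul_rpow_nhdsGT_zero one_pos).comp hε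
      have h2 : Tendsto (fun σ : ℝ => (Real.log ((b : ℝ) * σ + 1) * ((b : ℝ) * σ + 1) -
          Real.log η * ((b : ℝ) * σ + 1)) / p) l (nhds ((0 - Real.log η * 0) / p)) := by
        refine (Tendsto.sub ?_ (hε0.const_mul _)).div_const _
        simpa [Function.comp_def] using h1
      have h3 := (Real.continuous_exp.tendsto _).comp h2
      simp only [mul_zero, sub_zero, zero_div, Real.exp_zero] at h3
      refine h3.congr' ?_
      filter_upwards [hmem] with σ hσ
      rw [Function.comp_apply, Real.log_div hσ.2.1.ne' hη0.ne']
      ring_nf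
    have hlow := ((hE.const_mul ((1 + η)⁻¹ * (1 - η) * Real.exp (-η))).div_const (q : ℝ)).mul
      ((hinv.const_mul (Real.log x₀ + Real.log η / p)).add_const (1 / p))
    rw [mul_zero] at hlow
    filter_upwards [hmem, hlow.eventually_const_lt hηc,
      (hδ η hη0).eventually_le_const hx₀] with σ hσ h1 h2
    have hlog : Real.log ((b : ℝ) * σ + 1) < 0 := Real.log_neg hσ.2.1 hσ.2.2
    refine h1.trans_le ?_
    refine le_trans (le_of_eq ?_)
      (mul_le_mul_of_nonneg_left (H σ hσ.1 hσ.2.1 h2) (by positivity))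
    rw [abs_of_neg hlog]
    generalize Real.exp (Real.log (((b : ℝ) * σ + 1) / η) / p * ((b : ℝ) * σ + 1)) = E
    rw [Real.log_div hσ.2.1.ne' hη0.ne']
    have hne' := hlog.ne
    field_simp
    ring
  · have hup := (hinv.const_mul ((b / q + 1) / p + b / q / p : ℝ)).add_const (1 / (p * q))
    rw [mul_zero, zero_add] at hup
    filter_upwards [hmem, hup.eventually_lt_const hc,
      (hδ 1 one_pos).eventually_le_const hr₁.1] with σ hσ h1 h2
    rw [div_one] at h2
    have hlog : Real.log ((b : ℝ) * σ + 1) < 0 := Real.log_neg hσ.2.1 hσ.2.2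
    refine lt_of_le_of_lt ?_ h1
    refine (mul_le_mul_of_nonneg_left (setIntegral_abs_fD'_rpow_le a b q qt p pt hp hab hq0 hqb
      hσ.1 hσ.2.1 hr₁.2.le hr₂.1.le hr₂.2.le h2) (by positivity)).trans_eq ?_
    rw [abs_of_neg hlog]
    have hne' := hlog.ne
    field_simp
    ring
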